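/- For the binomial random tree model σ_{bin,p} with p ∈ (0,1), the expected height satisfies E(H_{n,σ_{bin,p}}) ≤ c_p·log₂(n)·(1+o(1)) for every constant c_p > 2·max{1/log₂(1/p), 1/log₂(1/(1−p))}. -/

import Mathlib

inductive BTree
  | leaf : BTree
  | node : BTree → BTree → BTree
deriving DecidableEq

def BTree.size : BTree → ℕ
  | .leaf => 1
  | .node l r => l.size + r.size

def BTree.height : BTree → ℕ
  | .leaf => 0
  | .node l r => 1 + max l.height r.height

noncomputable def Pσ (σ : ℕ → ℕ → ℝ) : BTree → ℝ
  | .leaf => 1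
  | .node l r => σ l.size r.size * Pσ σ l * Pσ σ r

def trees : ℕ → Finset BTree
  | 0 => ∅
  | 1 => {BTree.leaf}
  | (n+2) => (Finset.Ico 1 (n+2)).attach.biUnion
      (fun k => ((trees k.1) ×ˢ (trees (n+2-k.1))).image (fun p => BTree.node p.1 p.2))
  decreasing_by
  · exact (Finset.mem_Ico.mp k.2).2
  · have h := (Finset.mem_Ico.mp k.2).1; omega

noncomputable def expPow (σ : ℕ → ℕ → ℝ) (φ : ℝ) (n : ℕ) : ℝ :=
  ∑ t ∈ trees n, Pσ σ t * φ ^ t.height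

noncomputable def expH (σ : ℕ → ℕ → ℝ) (n : ℕ) : ℝ :=
  ∑ t ∈ trees n, Pσ σ t * (t.height : ℝ)

open Filter Asymptotics

/-- The binomial random tree model: σ_{bin,p}(i, j) = p^{i−1}(1−p)^{j−1}·C(i+j−2, i−1). -/
noncomputable def σbin (p : ℝ) (i j : ℕ) : ℝ :=
  p ^ (i - 1) * (1 - p) ^ (j - 1) * ((i + j - 2).choose (i - 1))

/-!
For `φ > 1`, Jensen's inequality gives `E[height] log φ ≤ log E[φ ^ height]`, and
`φ ^ height (node l r) ≤ φ (φ ^ height l + φ ^ height r)` gives a linear recursive inequality for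
`E[φ ^ height]`.

In the binomial model the left subtree of a tree with `n + 2` leaves has `I + 1` leaves with `I`
binomially distributed, and `E[C(I, k)] = p ^ k C(n, k)`. If `φ (p ^ k + (1 - p) ^ k) ≤ 1`, then
`C(n, k)` is therefore a supersolution of the recursion up to lower order terms, and
`E[φ ^ height] = O(n ^ k)`. Hence `E[height]` is at most `k log n / log φ + O(1)`. With
`φ = 1 / (p ^ k + (1 - p) ^ k)`, already `k = 2` gives the constant with the factor `2`, and as
`k → ∞` the constant tends to `1 / log (1 / max p (1 - p))`, which removes that factor.
-/

open Finset

namespace BTree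

theorem height_lt_size (t : BTree) : t.height < t.size := by
  induction t with
  | leaf => simp [height, size]
  | node l r ihl ihr => simp only [height, size]; omega

theorem pow_height_node_le {φ : ℝ} (hφ : 0 ≤ φ) (l r : BTree) :
    φ ^ (node l r).height ≤ φ * (φ ^ l.height + φ ^ r.height) := by
  rw [height, pow_add, pow_one]
  refine mul_le_mul_of_nonneg_left ?_ hφ
  rcases max_choice l.height r.height with h | h <;> rw [h]
  · exact le_add_of_nonneg_right (pow_nonneg hφ _)
  · exact le_add_of_nonneg_left (pow_nonneg hφ _)

end BTree

theorem size_eq_of_mem_trees {n : ℕ} {t : BTree} (ht : t ∈ trees n) : t.size = n := by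
  induction t generalizing n with
  | leaf =>
    match n with
    | 0 => simp [trees] at ht
    | 1 => rfl
    | n + 2 => simp [trees] at ht
  | node l r ihl ihr =>
    match n with
    | 0 => simp [trees] at ht
    | 1 => simp [trees] at ht
    | n + 2 =>
      rw [trees] at ht
      simp only [mem_biUnion, mem_image, mem_product] at ht
      obtain ⟨⟨k, hk⟩, -, ⟨l', r'⟩, ⟨hl, hr⟩, hnode⟩ := ht
      obtain ⟨rfl, rfl⟩ := BTree.node.inj hnode
      rw [BTree.size, ihl hl, ihr hr]
      exact Nat.add_sub_of_le (mem_Ico.mp hk).2.le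

theorem sum_trees_add_two {M : Type*} [AddCommMonoid M] (n : ℕ) (F : BTree → M) :
    ∑ t ∈ trees (n + 2), F t = ∑ ij ∈ antidiagonal n,
      ∑ l ∈ trees (ij.1 + 1), ∑ r ∈ trees (ij.2 + 1), F (.node l r) := by
  have sum_by_left_size : ∑ t ∈ trees (n + 2), F t = ∑ k ∈ Ico 1 (n + 2),
      ∑ l ∈ trees k, ∑ r ∈ trees (n + 2 - k), F (.node l r) := by
    rw [trees, sum_biUnion, ← sum_attach (Ico 1 (n + 2))]
    · refine sum_congr rfl fun k _ => ?_
      rw [sum_image, sum_product]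
      rintro ⟨l, r⟩ _ ⟨l', r'⟩ _ h
      simpa using h
    · intro a _ b _ hab
      refine disjoint_left.mpr fun t ht ht' => hab (Subtype.ext ?_)
      simp only [mem_image, mem_product] at ht ht'
      obtain ⟨⟨l, r⟩, ⟨hl, -⟩, rfl⟩ := ht
      obtain ⟨⟨l', r'⟩, ⟨hl', -⟩, h⟩ := ht'
      rw [← size_eq_of_mem_trees hl, ← size_eq_of_mem_trees hl', (BTree.node.inj h).1]
  rw [sum_by_left_size, sum_Ico_eq_sum_range, Finset.Nat.sum_antidiagonal_eq_sum_range_succ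
    fun i j => ∑ l ∈ trees (i + 1), ∑ r ∈ trees (j + 1), F (.node l r)]
  refine sum_congr rfl fun i hi => ?_
  have hi : i ≤ n := Nat.lt_succ_iff.mp (mem_range.mp hi)
  rw [add_comm 1 i, show n + 2 - (i + 1) = n - i + 1 by omega]

theorem sum_trees_add_two_Pσ_mul (σ : ℕ → ℕ → ℝ) (n : ℕ) (F : BTree → ℝ) :
    ∑ t ∈ trees (n + 2), Pσ σ t * F t = ∑ ij ∈ antidiagonal n, σ (ij.1 + 1) (ij.2 + 1) *
      ∑ l ∈ trees (ij.1 + 1), ∑ r ∈ trees (ij.2 + 1), Pσ σ l * Pσ σ r * F (.node l r) := by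
  rw [sum_trees_add_two]
  refine sum_congr rfl fun ij _ => ?_
  simp only [mul_sum]
  refine sum_congr rfl fun l hl => sum_congr rfl fun r hr => ?_
  rw [Pσ, size_eq_of_mem_trees hl, size_eq_of_mem_trees hr]
  ring

/-- `σ` is a leaf-centric binary tree source: for every `n`, the numbers `σ i j` with `i, j ≥ 1` and
`i + j = n + 2` form a probability distribution. Positive indices are written as successors; the
values of `σ` at a zero index are irrelevant and left unconstrained. -/
structure IsTreeSource (σ : ℕ → ℕ → ℝ) : Prop where
  nonneg : ∀ i j, 0 ≤ σ (i + 1) (j + 1)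
  sum_eq_one : ∀ n, ∑ ij ∈ antidiagonal n, σ (ij.1 + 1) (ij.2 + 1) = 1

namespace IsTreeSource

variable {σ : ℕ → ℕ → ℝ} {φ : ℝ}

theorem Pσ_nonneg (hσ : IsTreeSource σ) (t : BTree) : 0 ≤ Pσ σ t := by
  induction t with
  | leaf => simp [Pσ]
  | node l r ihl ihr =>
    obtain ⟨i, hi⟩ := Nat.exists_eq_add_one_of_ne_zero (Nat.ne_zero_of_lt l.height_lt_size)
    obtain ⟨j, hj⟩ := Nat.exists_eq_add_one_of_ne_zero (Nat.ne_zero_of_lt r.height_lt_size)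
    rw [Pσ, hi, hj]
    exact mul_nonneg (mul_nonneg (hσ.nonneg i j) ihl) ihr

theorem sum_Pσ_eq_one (hσ : IsTreeSource σ) {n : ℕ} (hn : n ≠ 0) :
    ∑ t ∈ trees n, Pσ σ t = 1 := by
  induction n using Nat.strong_induction_on with
  | _ n ih =>
    match n with
    | 0 => contradiction
    | 1 => simp [trees, Pσ]
    | n + 2 =>
      have split_root := sum_trees_add_two_Pσ_mul σ n fun _ => 1
      simp only [mul_one] at split_root
      rw [split_root, ← hσ.sum_eq_one n]
      refine sum_congr rfl fun ij hij => ?_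
      have hij := mem_antidiagonal.mp hij
      rw [← sum_mul_sum, ih (ij.1 + 1) (by omega) (Nat.succ_ne_zero _),
        ih (ij.2 + 1) (by omega) (Nat.succ_ne_zero _), mul_one, mul_one]

theorem one_le_expPow (hσ : IsTreeSource σ) (hφ : 1 ≤ φ) {n : ℕ} (hn : n ≠ 0) :
    1 ≤ expPow σ φ n := by
  rw [← hσ.sum_Pσ_eq_one hn]
  exact sum_le_sum fun t _ => le_mul_of_one_le_right (hσ.Pσ_nonneg t) (one_le_pow₀ hφ)

theorem expPow_add_one_le_pow (hσ : IsTreeSource σ) (hφ : 1 ≤ φ) (n : ℕ) :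
    expPow σ φ (n + 1) ≤ φ ^ n := by
  calc expPow σ φ (n + 1)
      ≤ ∑ t ∈ trees (n + 1), Pσ σ t * φ ^ n := by
        refine sum_le_sum fun t ht => mul_le_mul_of_nonneg_left ?_ (hσ.Pσ_nonneg t)
        have height_lt : t.height < n + 1 := size_eq_of_mem_trees ht ▸ t.height_lt_size
        exact pow_le_pow_right₀ hφ (Nat.lt_succ_iff.mp height_lt)
    _ = φ ^ n := by rw [← sum_mul, hσ.sum_Pσ_eq_one n.succ_ne_zero, one_mul]

theorem expPow_add_two_le (hσ : IsTreeSource σ) (hφ : 0 ≤ φ) (n : ℕ) :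
    expPow σ φ (n + 2) ≤ φ * ∑ ij ∈ antidiagonal n,
      σ (ij.1 + 1) (ij.2 + 1) * (expPow σ φ (ij.1 + 1) + expPow σ φ (ij.2 + 1)) := by
  rw [expPow, sum_trees_add_two_Pσ_mul, mul_sum]
  refine sum_le_sum fun ij _ => ?_
  rw [mul_left_comm]
  refine mul_le_mul_of_nonneg_left ?_ (hσ.nonneg _ _)
  calc ∑ l ∈ trees (ij.1 + 1), ∑ r ∈ trees (ij.2 + 1),
        Pσ σ l * Pσ σ r * φ ^ (BTree.node l r).height
      ≤ ∑ l ∈ trees (ij.1 + 1), ∑ r ∈ trees (ij.2 + 1),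
        Pσ σ l * Pσ σ r * (φ * (φ ^ l.height + φ ^ r.height)) := by
        gcongr with l _ r _
        · exact mul_nonneg (hσ.Pσ_nonneg l) (hσ.Pσ_nonneg r)
        · exact BTree.pow_height_node_le hφ l r
    _ = φ * ((∑ l ∈ trees (ij.1 + 1), Pσ σ l * φ ^ l.height) * ∑ r ∈ trees (ij.2 + 1), Pσ σ r
        + (∑ l ∈ trees (ij.1 + 1), Pσ σ l) * ∑ r ∈ trees (ij.2 + 1), Pσ σ r * φ ^ r.height) := by
        rw [sum_mul_sum, sum_mul_sum, ← sum_add_distrib, mul_sum]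
        refine sum_congr rfl fun l _ => ?_
        rw [← sum_add_distrib, mul_sum]
        exact sum_congr rfl fun r _ => by ring
    _ = φ * (expPow σ φ (ij.1 + 1) + expPow σ φ (ij.2 + 1)) := by
        rw [hσ.sum_Pσ_eq_one (Nat.succ_ne_zero _), hσ.sum_Pσ_eq_one (Nat.succ_ne_zero _),
          mul_one, one_mul, expPow, expPow]

theorem expH_mul_log_le_log_expPow (hσ : IsTreeSource σ) (hφ : 0 < φ) {n : ℕ} (hn : n ≠ 0) :
    expH σ n * Real.log φ ≤ Real.log (expPow σ φ n) := by
  have jensen := strictConcaveOn_log_Ioi.concaveOn.le_map_sum (t := trees n) (w := Pσ σ)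
    (p := fun t => φ ^ t.height) (fun t _ => hσ.Pσ_nonneg t) (hσ.sum_Pσ_eq_one hn)
    (fun t _ => pow_pos hφ t.height)
  simpa only [expH, expPow, smul_eq_mul, Real.log_pow, sum_mul, mul_assoc] using jensen

theorem eventually_expH_le_of_expPow_isBigO (hσ : IsTreeSource σ) (hφ : 1 < φ) {d c : ℝ}
    (hO : expPow σ φ =O[atTop] fun n : ℕ => (n : ℝ) ^ d) (hc : d < c * Real.log φ) :
    ∀ᶠ n : ℕ in atTop, expH σ n ≤ c * Real.log n := by
  obtain ⟨C, hC, hbound⟩ := hO.exists_pos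
  have log_dominates : ∀ᶠ n : ℕ in atTop, Real.log C ≤ (c * Real.log φ - d) * Real.log n :=
    ((Real.tendsto_log_atTop.comp tendsto_natCast_atTop_atTop).const_mul_atTop
      (sub_pos.mpr hc)).eventually_ge_atTop _
  filter_upwards [hbound.bound, log_dominates, eventually_ne_atTop 0] with n hn hlog hn0
  have n_pos : (0 : ℝ) < n := Nat.cast_pos.mpr (Nat.pos_of_ne_zero hn0)
  have expPow_pos : 0 < expPow σ φ n := one_pos.trans_le (hσ.one_le_expPow hφ.le hn0)
  rw [Real.norm_of_nonneg expPow_pos.le, Real.norm_of_nonneg (Real.rpow_nonneg n_pos.le d)] at hn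
  refine le_of_mul_le_mul_right ?_ (Real.log_pos hφ)
  calc expH σ n * Real.log φ
      ≤ Real.log (expPow σ φ n) := hσ.expH_mul_log_le_log_expPow (one_pos.trans hφ) hn0
    _ ≤ Real.log (C * (n : ℝ) ^ d) := Real.log_le_log expPow_pos hn
    _ = Real.log C + d * Real.log n := by
        rw [Real.log_mul hC.ne' (Real.rpow_pos_of_pos n_pos d).ne', Real.log_rpow n_pos]
    _ ≤ c * Real.log n * Real.log φ := by linarith

end IsTreeSource

theorem sum_antidiagonal_choose_mul_pow_mul_choose {R : Type*} [CommSemiring R] {p q : R}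
    (hpq : p + q = 1) (n k : ℕ) :
    ∑ ij ∈ antidiagonal n, (n.choose ij.1 : R) * (p ^ ij.1 * q ^ ij.2 * (ij.1.choose k : R)) =
      p ^ k * n.choose k := by
  induction n generalizing k with
  | zero => cases k <;> simp
  | succ n ih =>
    have condition_on_last_trial :
        ∑ ij ∈ antidiagonal (n + 1),
          ((n + 1).choose ij.1 : R) * (p ^ ij.1 * q ^ ij.2 * (ij.1.choose k : R)) =
        q * ∑ ij ∈ antidiagonal n,
          (n.choose ij.1 : R) * (p ^ ij.1 * q ^ ij.2 * (ij.1.choose k : R)) +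
        p * ∑ ij ∈ antidiagonal n,
          (n.choose ij.1 : R) * (p ^ ij.1 * q ^ ij.2 * ((ij.1 + 1).choose k : R)) := by
      rw [sum_antidiagonal_choose_succ_mul fun i j => p ^ i * q ^ j * (i.choose k : R), mul_sum,
        mul_sum]
      congr 1 <;> refine sum_congr rfl fun ij hij => ?_
      · ring
      · rw [Nat.choose_symm_of_eq_add (mem_antidiagonal.mp hij).symm]
        ring
    rw [condition_on_last_trial]
    cases k with
    | zero =>
      have ih_zero := ih 0
      simp only [Nat.choose_zero_right] at ih_zero ⊢
      rw [ih_zero, ← add_mul, add_comm q, hpq, one_mul]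
    | succ k =>
      simp only [Nat.choose_succ_succ', Nat.cast_add, mul_add, sum_add_distrib]
      rw [ih k, ih (k + 1)]
      calc q * (p ^ (k + 1) * n.choose (k + 1)) +
            (p * (p ^ k * n.choose k) + p * (p ^ (k + 1) * n.choose (k + 1)))
          = p ^ (k + 1) * n.choose k + (p + q) * (p ^ (k + 1) * n.choose (k + 1)) := by ring
        _ = p ^ (k + 1) * n.choose k + p ^ (k + 1) * n.choose (k + 1) := by rw [hpq, one_mul]

theorem σbin_add_one_add_one (p : ℝ) (i j : ℕ) :
    σbin p (i + 1) (j + 1) = (i + j).choose i * (p ^ i * (1 - p) ^ j) := by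
  rw [σbin, show i + 1 + (j + 1) - 2 = i + j by omega, Nat.add_sub_cancel, Nat.add_sub_cancel,
    mul_comm]

theorem σbin_symm (p : ℝ) (i j : ℕ) :
    σbin p (i + 1) (j + 1) = σbin (1 - p) (j + 1) (i + 1) := by
  rw [σbin_add_one_add_one, σbin_add_one_add_one, sub_sub_cancel, Nat.choose_symm_add,
    add_comm j i, mul_comm (p ^ i)]

theorem sum_σbin_mul_choose_left (p : ℝ) (n k : ℕ) :
    ∑ ij ∈ antidiagonal n, σbin p (ij.1 + 1) (ij.2 + 1) * ij.1.choose k = p ^ k * n.choose k := by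
  rw [← sum_antidiagonal_choose_mul_pow_mul_choose (add_sub_cancel p 1) n k]
  refine sum_congr rfl fun ij hij => ?_
  rw [σbin_add_one_add_one, mem_antidiagonal.mp hij, mul_assoc]

theorem sum_σbin_eq_one (p : ℝ) (n : ℕ) :
    ∑ ij ∈ antidiagonal n, σbin p (ij.1 + 1) (ij.2 + 1) = 1 := by
  simpa using sum_σbin_mul_choose_left p n 0

theorem sum_σbin_mul_choose_right (p : ℝ) (n k : ℕ) :
    ∑ ij ∈ antidiagonal n, σbin p (ij.1 + 1) (ij.2 + 1) * ij.2.choose k =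
      (1 - p) ^ k * n.choose k := by
  rw [← sum_σbin_mul_choose_left, ← Finset.Nat.sum_antidiagonal_swap]
  exact sum_congr rfl fun ij _ => by rw [σbin_symm]; rfl

theorem sum_σbin_mul_affine_choose (p a b : ℝ) (n k : ℕ) :
    ∑ ij ∈ antidiagonal n, σbin p (ij.1 + 1) (ij.2 + 1) *
      ((a * ij.1.choose k + b) + (a * ij.2.choose k + b)) =
      a * ((p ^ k + (1 - p) ^ k) * n.choose k) + 2 * b := by
  have expand (w x y : ℝ) :
      w * ((a * x + b) + (a * y + b)) = a * (w * x) + a * (w * y) + 2 * b * w := by ring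
  simp only [expand, sum_add_distrib, ← mul_sum, sum_σbin_mul_choose_left,
    sum_σbin_mul_choose_right, sum_σbin_eq_one]
  ring

-- The Pascal increment `C(m, k) ≥ 1` of the leading term pays for the doubled constant term.
theorem choose_supersolution {φ s : ℝ} (hφ : 0 ≤ φ) {m k : ℕ} (hs : φ * s ≤ 1) (hkm : k ≤ m) :
    φ * (2 * φ ^ (k + 1) * (s * m.choose (k + 1)) + 2 * φ ^ k) ≤
      2 * φ ^ (k + 1) * (m + 1).choose (k + 1) + φ ^ k := by
  have one_le_choose : (1 : ℝ) ≤ m.choose k := Nat.one_le_cast.mpr (Nat.choose_pos hkm)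
  calc φ * (2 * φ ^ (k + 1) * (s * m.choose (k + 1)) + 2 * φ ^ k)
      = 2 * φ ^ (k + 1) * (φ * s * m.choose (k + 1) + 1) := by ring
    _ ≤ 2 * φ ^ (k + 1) * (1 * m.choose (k + 1) + m.choose k) := by gcongr
    _ = 2 * φ ^ (k + 1) * (m + 1).choose (k + 1) := by
        rw [Nat.choose_succ_succ', Nat.cast_add]
        ring
    _ ≤ 2 * φ ^ (k + 1) * (m + 1).choose (k + 1) + φ ^ k :=
        le_add_of_nonneg_right (by positivity)

section Binomial

variable {p : ℝ}

theorem isTreeSource_σbin (hp0 : 0 ≤ p) (hp1 : p ≤ 1) : IsTreeSource (σbin p) where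
  nonneg i j := by
    have : 0 ≤ 1 - p := sub_nonneg.mpr hp1
    rw [σbin_add_one_add_one]
    positivity
  sum_eq_one := sum_σbin_eq_one p

theorem expPow_σbin_le (hp0 : 0 ≤ p) (hp1 : p ≤ 1) {φ : ℝ} (hφ : 1 ≤ φ) {k : ℕ}
    (hk : φ * (p ^ (k + 1) + (1 - p) ^ (k + 1)) ≤ 1) (n : ℕ) :
    expPow (σbin p) φ (n + 1) ≤ 2 * φ ^ (k + 1) * n.choose (k + 1) + φ ^ k := by
  have hσ := isTreeSource_σbin hp0 hp1
  have φ_nonneg : 0 ≤ φ := zero_le_one.trans hφ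
  induction n using Nat.strong_induction_on with
  | _ n ih =>
    rcases le_or_gt n k with hnk | hkn
    · calc expPow (σbin p) φ (n + 1)
          ≤ φ ^ n := hσ.expPow_add_one_le_pow hφ n
        _ ≤ φ ^ k := pow_le_pow_right₀ hφ hnk
        _ ≤ 2 * φ ^ (k + 1) * n.choose (k + 1) + φ ^ k := le_add_of_nonneg_left (by positivity)
    obtain ⟨m, rfl⟩ := Nat.exists_eq_add_one_of_ne_zero (Nat.ne_zero_of_lt hkn)
    calc expPow (σbin p) φ (m + 2)
        ≤ φ * ∑ ij ∈ antidiagonal m, σbin p (ij.1 + 1) (ij.2 + 1) *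
            (expPow (σbin p) φ (ij.1 + 1) + expPow (σbin p) φ (ij.2 + 1)) :=
          hσ.expPow_add_two_le φ_nonneg m
      _ ≤ φ * ∑ ij ∈ antidiagonal m, σbin p (ij.1 + 1) (ij.2 + 1) *
            ((2 * φ ^ (k + 1) * ij.1.choose (k + 1) + φ ^ k) +
              (2 * φ ^ (k + 1) * ij.2.choose (k + 1) + φ ^ k)) := by
          gcongr with ij hij
          · exact hσ.nonneg _ _
          all_goals
            have := mem_antidiagonal.mp hij
            exact ih _ (by omega)
      _ = φ * (2 * φ ^ (k + 1) * ((p ^ (k + 1) + (1 - p) ^ (k + 1)) * m.choose (k + 1)) +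
            2 * φ ^ k) := by rw [sum_σbin_mul_affine_choose]
      _ ≤ 2 * φ ^ (k + 1) * (m + 1).choose (k + 1) + φ ^ k :=
          choose_supersolution φ_nonneg hk (Nat.lt_succ_iff.mp hkn)

theorem expPow_σbin_isBigO (hp0 : 0 ≤ p) (hp1 : p ≤ 1) {φ : ℝ} (hφ : 1 ≤ φ) {k : ℕ}
    (hk : φ * (p ^ (k + 1) + (1 - p) ^ (k + 1)) ≤ 1) :
    expPow (σbin p) φ =O[atTop] fun n : ℕ => (n : ℝ) ^ (k + 1) := by
  refine IsBigO.of_bound (2 * φ ^ (k + 1) + φ ^ k) ?_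
  filter_upwards [eventually_ne_atTop 0] with n hn
  have expPow_pos := one_pos.trans_le ((isTreeSource_σbin hp0 hp1).one_le_expPow hφ hn)
  rw [Real.norm_of_nonneg expPow_pos.le, Real.norm_of_nonneg (by positivity)]
  obtain ⟨m, rfl⟩ := Nat.exists_eq_add_one_of_ne_zero hn
  have choose_le : (m.choose (k + 1) : ℝ) ≤ ((m + 1 : ℕ) : ℝ) ^ (k + 1) := by
    exact_mod_cast (m.choose_le_pow (k + 1)).trans (Nat.pow_le_pow_left m.le_succ _)
  have one_le : (1 : ℝ) ≤ ((m + 1 : ℕ) : ℝ) ^ (k + 1) :=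
    one_le_pow₀ (Nat.one_le_cast.mpr m.succ_pos)
  calc expPow (σbin p) φ (m + 1)
      ≤ 2 * φ ^ (k + 1) * m.choose (k + 1) + φ ^ k := expPow_σbin_le hp0 hp1 hφ hk m
    _ ≤ 2 * φ ^ (k + 1) * ((m + 1 : ℕ) : ℝ) ^ (k + 1) +
          φ ^ k * ((m + 1 : ℕ) : ℝ) ^ (k + 1) := by
        gcongr
        exact le_mul_of_one_le_right (by positivity) one_le
    _ = (2 * φ ^ (k + 1) + φ ^ k) * ((m + 1 : ℕ) : ℝ) ^ (k + 1) := by ring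

end Binomial

theorem exists_lt_mul_neg_log_pow_add_pow {p q c : ℝ} (hp : 0 < p) (hq : 0 < q) (hc : 0 < c)
    (hcp : 1 < c * -Real.log p) (hcq : 1 < c * -Real.log q) :
    ∃ k : ℕ, ((k + 1 : ℕ) : ℝ) < c * -Real.log (p ^ (k + 1) + q ^ (k + 1)) := by
  wlog hpq : p ≤ q generalizing p q
  · simpa only [add_comm] using this hq hp hcq hcp (le_of_not_ge hpq)
  obtain ⟨k, hk⟩ := exists_nat_gt (c * Real.log 2 / (c * -Real.log q - 1))
  refine ⟨k, ?_⟩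
  have linear_dominates : c * Real.log 2 < k * (c * -Real.log q - 1) :=
    (div_lt_iff₀ (sub_pos.mpr hcq)).mp hk
  have log_le : Real.log (p ^ (k + 1) + q ^ (k + 1)) ≤ Real.log 2 + (k + 1 : ℕ) * Real.log q := by
    rw [← Real.log_pow, ← Real.log_mul two_ne_zero (pow_pos hq _).ne']
    refine Real.log_le_log (by positivity) ?_
    rw [two_mul]
    gcongr
  calc ((k + 1 : ℕ) : ℝ)
      < c * -(Real.log 2 + (k + 1 : ℕ) * Real.log q) := by push_cast; linarith
    _ ≤ c * -Real.log (p ^ (k + 1) + q ^ (k + 1)) := by gcongr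

theorem eventually_expH_σbin_le {p c : ℝ} (hp0 : 0 < p) (hp1 : p < 1)
    (hcp : 1 < c * -Real.log p) (hcq : 1 < c * -Real.log (1 - p)) :
    ∀ᶠ n : ℕ in atTop, expH (σbin p) n ≤ c * Real.log n := by
  have hq0 : 0 < 1 - p := sub_pos.mpr hp1
  have hc : 0 < c :=
    pos_of_mul_pos_left (one_pos.trans hcp) (neg_nonneg.mpr (Real.log_nonpos hp0.le hp1.le))
  obtain ⟨k, hk⟩ := exists_lt_mul_neg_log_pow_add_pow hp0 hq0 hc hcp hcq
  have s_pos : 0 < p ^ (k + 1) + (1 - p) ^ (k + 1) := by positivity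
  rw [← Real.log_inv] at hk
  have log_pos : 0 < Real.log (p ^ (k + 1) + (1 - p) ^ (k + 1))⁻¹ :=
    pos_of_mul_pos_right ((Nat.cast_nonneg _).trans_lt hk) hc.le
  have one_lt : 1 < (p ^ (k + 1) + (1 - p) ^ (k + 1))⁻¹ :=
    (Real.log_pos_iff (inv_nonneg.mpr s_pos.le)).mp log_pos
  refine (isTreeSource_σbin hp0.le hp1.le).eventually_expH_le_of_expPow_isBigO one_lt ?_ hk
  simp only [Real.rpow_natCast]
  exact expPow_σbin_isBigO hp0.le hp1.le one_lt.le (inv_mul_cancel₀ s_pos.ne').le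

theorem logb_one_div_pos {b x : ℝ} (hb : 1 < b) (hx0 : 0 < x) (hx1 : x < 1) :
    0 < Real.logb b (1 / x) :=
  Real.logb_pos hb (one_lt_one_div hx0 hx1)

theorem binomial_model_expected_height_general (p : ℝ) (hp0 : 0 < p) (hp1 : p < 1) (cp : ℝ)
    (hcp : max (Real.logb 2 (1 / p))⁻¹ (Real.logb 2 (1 / (1 - p)))⁻¹ < cp) :
    ∀ᶠ n : ℕ in atTop, expH (σbin p) n ≤ cp * Real.logb 2 n := by
  obtain ⟨hcp_left, hcp_right⟩ := max_lt_iff.mp hcp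
  have logb_p_pos := logb_one_div_pos one_lt_two hp0 hp1
  have logb_q_pos := logb_one_div_pos one_lt_two (sub_pos.mpr hp1) (sub_lt_self 1 hp0)
  have rescale (x : ℝ) : cp / Real.log 2 * x = cp * (x / Real.log 2) := by ring
  have expH_le := eventually_expH_σbin_le (c := cp / Real.log 2) hp0 hp1
  simp only [rescale, ← Real.log_inv, ← one_div, Real.log_div_log] at expH_le
  exact expH_le ((inv_lt_iff_one_lt_mul₀ logb_p_pos).mp hcp_left)
    ((inv_lt_iff_one_lt_mul₀ logb_q_pos).mp hcp_right)

theorem binomial_model_expected_height (p : ℝ) (hp0 : 0 < p) (hp1 : p < 1)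
    (cp : ℝ)
    (hcp : 2 * max (Real.logb 2 (1 / p))⁻¹ (Real.logb 2 (1 / (1 - p)))⁻¹ < cp) :
    ∃ g : ℕ → ℝ, g =o[atTop] (fun _ => (1 : ℝ)) ∧
      ∀ᶠ n : ℕ in atTop,
        expH (σbin p) n ≤ cp * Real.logb 2 n * (1 + g n) := by
  have inv_logb_pos := inv_pos.mpr (logb_one_div_pos one_lt_two hp0 hp1)
  exact ⟨fun _ => 0, isLittleO_zero _ _, by
    simpa using binomial_model_expected_height_general p hp0 hp1 cp
      ((le_mul_of_one_le_left (le_max_of_le_left inv_logb_pos.le) one_le_two).trans_lt hcp)⟩
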